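/- For every real q ∈ (0, 1/2), the double series T(q) = ∑_{ν=1}^∞ ∑_{j=0}^∞ (a(q) q^{-j};q)_j/(q^{-j};q)_j · v(q)^ν q^{(j+1)ν}/(1-2q+q^{ν+2}) converges absolutely and PA(q) = D(q) - q² A(q) · ( (a(q);q)_∞ (v(q);q)_∞ / ((q;q)_∞ (a(q)v(q);q)_∞) ) · T(q). -/

import Mathlib

open Complex Filter Asymptotics Topology

noncomputable section

/-- finite q-Pochhammer symbol `(x;q)_n` -/
def qPF (x q : ℂ) (n : ℕ) : ℂ := ∏ i ∈ Finset.range n, (1 - x * q ^ i)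

/-- infinite q-Pochhammer symbol `(x;q)_∞` -/
def qPI (x q : ℂ) : ℂ := ∏' i : ℕ, (1 - x * q ^ i)

def uF (q : ℂ) : ℂ := q / (1 - q)
def vF (q : ℂ) : ℂ := (1 - q + q ^ 2) / (1 - q)
def aF (q : ℂ) : ℂ := q ^ 2 / (1 - q + q ^ 2)
def AF (q : ℂ) : ℂ := 2 * q * (1 - q) ^ 2 / (1 - 2 * q) ^ 2
def CF (q : ℂ) : ℂ := 2 * q * (3 - 10 * q + 9 * q ^ 2 - q ^ 3) / ((1 - q) * (1 - 2 * q) ^ 2)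
def DF (q : ℂ) : ℂ := CF q - (q ^ 2 / (1 - q) ^ 2) * AF q * qPI (vF q) q / qPI (aF q * vF q) q

/-- the `m`-th term (for `m ≥ 1`) of the explicit series for `PA(q)` -/
def PAterm (q : ℂ) (m : ℕ) : ℂ :=
  (-1) ^ m * q ^ (2 * m) / ((1 - 2 * q) ^ m * (1 - q - q ^ (m + 1))) *
    ∏ k ∈ Finset.Icc 1 (m - 1),
      ((1 - q - q ^ k + q ^ (k + 1) - q ^ (k + 2)) / (1 - q - q ^ (k + 1)))

/-- the explicit convergent series defining `PA(q)` for small `q` -/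
def PAseries (q : ℂ) : ℂ :=
  (-2 * q ^ 3 * (1 - q) ^ 2 / (1 - 2 * q) ^ 2) * (∑' m : ℕ, PAterm q (m + 1))
    + 2 * q * (3 - 10 * q + 9 * q ^ 2 - q ^ 3) / ((1 - 2 * q) ^ 2 * (1 - q))

/-- the `(ν,j)` term (for `ν ≥ 1`, `j ≥ 0`) of the double sum `T(q)` -/
def Tterm (q : ℂ) (ν j : ℕ) : ℂ :=
  (qPF (aF q * q ^ (-(j : ℤ))) q j / qPF (q ^ (-(j : ℤ))) q j) *
    (vF q ^ ν * q ^ ((j + 1) * ν) / (1 - 2 * q + q ^ (ν + 2)))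

/-- coefficients of the q-binomial series -/
def cq (a q : ℂ) (n : ℕ) : ℂ := ∏ i ∈ Finset.range n, ((1 - a * q ^ i) / (1 - q ^ (i + 1)))

/-- real majorant of `cq` -/
def bq (α r : ℝ) (n : ℕ) : ℝ := ∏ i ∈ Finset.range n, ((1 + α * r ^ i) / (1 - r ^ (i + 1)))

lemma one_sub_pow_pos {r : ℝ} (h0 : 0 ≤ r) (h1 : r < 1) (n : ℕ) : 0 < 1 - r ^ (n + 1) := by
  have := pow_lt_one₀ h0 h1 (Nat.succ_ne_zero n)
  simp only [Nat.succ_eq_add_one] at this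
  linarith

lemma bq_pos {α r : ℝ} (hα : 0 ≤ α) (h0 : 0 ≤ r) (h1 : r < 1) (n : ℕ) : 0 < bq α r n := by
  unfold bq
  apply Finset.prod_pos
  intro i _
  have := one_sub_pow_pos h0 h1 i
  positivity

lemma bq_summable {α r ρ : ℝ} (hα : 0 ≤ α) (h0 : 0 ≤ r) (h1 : r < 1) (hρ0 : 0 ≤ ρ) (hρ : ρ < 1) :
    Summable (fun n => bq α r n * ρ ^ n) := by
  obtain ⟨s, hs1, hs2⟩ := exists_between hρ
  apply summable_of_ratio_norm_eventually_le hs2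
  have hp : Tendsto (fun n : ℕ => r ^ n) atTop (𝓝 0) := tendsto_pow_atTop_nhds_zero_of_lt_one h0 h1
  have ht : Tendsto (fun n : ℕ => ((1 + α * r ^ n) / (1 - r ^ (n + 1))) * ρ) atTop
      (𝓝 (((1 + α * 0) / (1 - 0)) * ρ)) := by
    apply Tendsto.mul_const
    apply Tendsto.div
    · exact (hp.const_mul α).const_add 1
    · exact ((tendsto_add_atTop_iff_nat 1).2 hp).const_sub 1
    · norm_num
  have hlt : ((1 + α * 0) / (1 - 0)) * ρ < s := by simpa using hs1
  filter_upwards [ht.eventually (gt_mem_nhds hlt)] with n hn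
  have hb := bq_pos hα h0 h1 n
  have hb' := bq_pos hα h0 h1 (n + 1)
  rw [Real.norm_of_nonneg (by positivity), Real.norm_of_nonneg (by positivity)]
  have : bq α r (n + 1) = bq α r n * ((1 + α * r ^ n) / (1 - r ^ (n + 1))) := by
    unfold bq; rw [Finset.prod_range_succ]
  have h3 : 0 ≤ bq α r n * ρ ^ n := by positivity
  calc bq α r (n + 1) * ρ ^ (n + 1)
      = ((1 + α * r ^ n) / (1 - r ^ (n + 1)) * ρ) * (bq α r n * ρ ^ n) := by rw [this]; ring
    _ ≤ s * (bq α r n * ρ ^ n) := by gcongr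

lemma cq_le {a q : ℂ} {α r : ℝ} (ha : ‖a‖ ≤ α) (hq : ‖q‖ ≤ r) (h1 : r < 1) (n : ℕ) :
    ‖cq a q n‖ ≤ bq α r n := by
  have h0 : 0 ≤ r := (norm_nonneg _).trans hq
  have hα : 0 ≤ α := (norm_nonneg _).trans ha
  unfold cq bq
  rw [norm_prod]
  apply Finset.prod_le_prod
  · intros; positivity
  · intro i _
    rw [norm_div]
    have hden := one_sub_pow_pos h0 h1 i
    apply div_le_div₀ (by positivity) _ hden
    · calc 1 - r ^ (i + 1) ≤ 1 - ‖q‖ ^ (i + 1) := by gcongr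
        _ = ‖(1 : ℂ)‖ - ‖q ^ (i + 1)‖ := by simp
        _ ≤ _ := norm_sub_norm_le _ _
    · calc ‖1 - a * q ^ i‖ ≤ ‖(1 : ℂ)‖ + ‖a * q ^ i‖ := norm_sub_le _ _
        _ = 1 + ‖a‖ * ‖q‖ ^ i := by simp
        _ ≤ _ := by gcongr

lemma one_sub_qpow_ne {q : ℂ} (hq : ‖q‖ < 1) (n : ℕ) : 1 - q ^ (n + 1) ≠ 0 := by
  intro h
  have h2 : q ^ (n + 1) = 1 := by linear_combination -h
  have h3 : ‖q‖ ^ (n + 1) = 1 := by rw [← norm_pow, h2]; simp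
  have := one_sub_pow_pos (norm_nonneg q) hq n
  linarith

lemma cq_succ {a q : ℂ} (hq : ‖q‖ < 1) (n : ℕ) :
    cq a q (n + 1) * (1 - q ^ (n + 1)) = cq a q n * (1 - a * q ^ n) := by
  unfold cq
  rw [Finset.prod_range_succ]
  have := one_sub_qpow_ne hq n
  field_simp

lemma cq_summable {a q z : ℂ} (hq : ‖q‖ < 1) (hz : ‖z‖ < 1) :
    Summable (fun n => cq a q n * z ^ n) := by
  apply Summable.of_norm_bounded (bq_summable (norm_nonneg a) (norm_nonneg q) hq (norm_nonneg z) hz)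
  intro n
  rw [norm_mul, norm_pow]
  gcongr
  exact cq_le le_rfl le_rfl hq n

lemma geom_norm_summable {q : ℂ} (x : ℂ) (hq : ‖q‖ < 1) : Summable (fun i : ℕ => ‖-(x * q ^ i)‖) := by
  simp only [norm_neg, norm_mul, norm_pow]
  exact (summable_geometric_of_lt_one (norm_nonneg q) hq).mul_left _

lemma qPI_multipliable {q : ℂ} (x : ℂ) (hq : ‖q‖ < 1) : Multipliable (fun i : ℕ => 1 - x * q ^ i) := by
  simpa [sub_eq_add_neg] using multipliable_one_add_of_summable (geom_norm_summable x hq)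

lemma qPF_tendsto {q : ℂ} (x : ℂ) (hq : ‖q‖ < 1) : Tendsto (qPF x q) atTop (𝓝 (qPI x q)) :=
  (qPI_multipliable x hq).hasProd.tendsto_prod_nat

lemma qPI_ne_zero {q x : ℂ} (hq : ‖q‖ < 1) (hx : ‖x‖ < 1) : qPI x q ≠ 0 := by
  have := tprod_one_add_ne_zero_of_summable (f := fun i : ℕ => -(x * q ^ i)) ?_ (geom_norm_summable x hq)
  · simpa [qPI, sub_eq_add_neg] using this
  · intro i h
    have h2 : x * q ^ i = 1 := by linear_combination -h
    have h3 : ‖x‖ * ‖q‖ ^ i = 1 := by rw [← norm_pow, ← norm_mul, h2]; simp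
    have : ‖q‖ ^ i ≤ 1 := pow_le_one₀ (norm_nonneg _) hq.le
    nlinarith [norm_nonneg x]

lemma qPI_split {q : ℂ} (x : ℂ) (hq : ‖q‖ < 1) (n : ℕ) :
    qPI x q = qPF x q n * qPI (x * q ^ n) q := by
  have h1 := (qPF_tendsto x hq).comp (tendsto_add_atTop_nat n)
  have h2 := (qPF_tendsto (x * q ^ n) hq).const_mul (qPF x q n)
  refine tendsto_nhds_unique h1 (h2.congr fun N => ?_)
  simp only [Function.comp, qPF]
  rw [add_comm, Finset.prod_range_add]
  congr 1
  apply Finset.prod_congr rfl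
  intro i _
  ring

lemma g_func {a q z : ℂ} (hq : ‖q‖ < 1) (hz : ‖z‖ < 1) :
    (1 - z) * ∑' n, cq a q n * z ^ n = (1 - a * z) * ∑' n, cq a q n * (z * q) ^ n := by
  have hzq : ‖z * q‖ < 1 := by
    rw [norm_mul]; nlinarith [norm_nonneg z, norm_nonneg q]
  have s1 := cq_summable (a := a) hq hz
  have s2 := cq_summable (a := a) hq hzq
  have e1 := s1.tsum_eq_zero_add
  have e2 := s2.tsum_eq_zero_add
  have s1' := (summable_nat_add_iff 1).2 s1
  have s2' := (summable_nat_add_iff 1).2 s2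
  have t1 := s1'.tsum_sub (s1.mul_left z)
  have t2 := s2'.tsum_sub (s2.mul_left (a * z))
  rw [tsum_mul_left] at t1 t2
  have e : ∀ n, cq a q (n + 1) * z ^ (n + 1) - z * (cq a q n * z ^ n) =
      cq a q (n + 1) * (z * q) ^ (n + 1) - a * z * (cq a q n * (z * q) ^ n) := by
    intro n
    have := cq_succ (a := a) hq n
    rw [mul_pow, mul_pow]
    linear_combination (z ^ (n + 1)) * this
  rw [tsum_congr e] at t1
  simp only [pow_zero] at e1 e2
  linear_combination e1 - e2 - t1 + t2

lemma qbinom {a q z : ℂ} (hq : ‖q‖ < 1) (hz : ‖z‖ < 1) :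
    qPI z q * ∑' n, cq a q n * z ^ n = qPI (a * z) q := by
  have key : ∀ N, qPF z q N * ∑' n, cq a q n * z ^ n =
      qPF (a * z) q N * ∑' n, cq a q n * (z * q ^ N) ^ n := by
    intro N
    induction N with
    | zero => simp [qPF]
    | succ N ih =>
      have hN : ‖z * q ^ N‖ < 1 := by
        rw [norm_mul, norm_pow]
        have : ‖q‖ ^ N ≤ 1 := pow_le_one₀ (norm_nonneg _) hq.le
        nlinarith [norm_nonneg z]
      have h := g_func (a := a) hq hN
      have p1 : qPF z q (N + 1) = qPF z q N * (1 - z * q ^ N) := Finset.prod_range_succ _ _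
      have p2 : qPF (a * z) q (N + 1) = qPF (a * z) q N * (1 - a * z * q ^ N) :=
        Finset.prod_range_succ _ _
      rw [p1, p2]
      have e : z * q ^ (N + 1) = z * q ^ N * q := by ring
      rw [e]
      linear_combination (1 - z * q ^ N) * ih + qPF (a * z) q N * h
  have h1 := (qPF_tendsto z hq).mul_const (∑' n, cq a q n * z ^ n)
  have h2 : Tendsto (fun N => ∑' n, cq a q n * (z * q ^ N) ^ n) atTop
      (𝓝 (∑' n, cq a q n * (0 : ℂ) ^ n)) := by
    apply tendsto_tsum_of_dominated_convergence
      (bq_summable (norm_nonneg a) (norm_nonneg q) hq (norm_nonneg z) hz)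
    · intro n
      have hp : Tendsto (fun N : ℕ => q ^ N) atTop (𝓝 0) := tendsto_pow_atTop_nhds_zero_of_norm_lt_one hq
      have := ((hp.const_mul z).pow n).const_mul (cq a q n)
      simpa using this
    · refine Eventually.of_forall fun N n => ?_
      rw [norm_mul, norm_pow, norm_mul, norm_pow]
      have : ‖q‖ ^ N ≤ 1 := pow_le_one₀ (norm_nonneg _) hq.le
      have hb := cq_le (a := a) le_rfl le_rfl hq n
      have : ‖z‖ * ‖q‖ ^ N ≤ ‖z‖ := by nlinarith [norm_nonneg z]
      have := (bq_pos (norm_nonneg a) (norm_nonneg q) hq n).le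
      gcongr
  have h3 : ∑' n, cq a q n * (0 : ℂ) ^ n = 1 := by
    rw [tsum_eq_single 0]
    · simp [cq]
    · intro n hn; simp [hn]
  rw [h3] at h2
  have h4 := (qPF_tendsto (a * z) hq).mul h2
  rw [mul_one] at h4
  exact tendsto_nhds_unique (h1.congr key) h4

lemma cq_eq (a q : ℂ) (n : ℕ) : cq a q n = qPF a q n / qPF q q n := by
  unfold cq qPF
  rw [← Finset.prod_div_distrib]
  apply Finset.prod_congr rfl
  intro i _
  rw [pow_succ']

/-- basic estimates in the disc of radius one half -/
lemma basic {q : ℂ} (hq : ‖q‖ < 1 / 2) :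
    1 - q ≠ 0 ∧ 1 - q + q ^ 2 ≠ 0 ∧ aF q * vF q = q ^ 2 / (1 - q) ∧ ‖aF q * vF q‖ ≤ 1 / 2 ∧
      ‖vF q‖ ≤ 3 / 2 ∧ ‖vF q * q‖ ≤ 3 / 4 ∧ ‖aF q‖ ≤ 1 ∧ 1 - 2 * q ≠ 0 := by
  have n1 : 1 / 2 ≤ ‖1 - q‖ := by
    have := norm_sub_norm_le (1 : ℂ) q
    rw [norm_one] at this; linarith
  have hq2 : ‖q ^ 2‖ ≤ 1 / 4 := by rw [norm_pow]; nlinarith [norm_nonneg q]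
  have n2 : 1 / 4 ≤ ‖1 - q + q ^ 2‖ := by
    have := norm_sub_norm_le (1 - q) (-q ^ 2)
    rw [norm_neg, sub_neg_eq_add] at this; linarith
  have h1 : 1 - q ≠ 0 := norm_pos_iff.1 (by linarith)
  have h2 : 1 - q + q ^ 2 ≠ 0 := norm_pos_iff.1 (by linarith)
  have h3 : aF q * vF q = q ^ 2 / (1 - q) := by unfold aF vF; field_simp
  have h4 : ‖q ^ 2 / (1 - q)‖ ≤ 1 / 2 := by
    rw [norm_div, div_le_iff₀ (by linarith)]; linarith
  have h5 : ‖vF q‖ ≤ 3 / 2 := by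
    have : vF q = 1 + q ^ 2 / (1 - q) := by unfold vF; field_simp
    rw [this]
    have := norm_add_le (1 : ℂ) (q ^ 2 / (1 - q))
    rw [norm_one] at this; linarith
  refine ⟨h1, h2, h3, h3 ▸ h4, h5, ?_, ?_, ?_⟩
  · rw [norm_mul]; nlinarith [norm_nonneg q, norm_nonneg (vF q)]
  · unfold aF
    rw [norm_div, div_le_iff₀ (by linarith)]; linarith
  · intro h
    have : q = 1 / 2 := by linear_combination (-1 / 2) * h
    rw [this] at hq
    norm_num at hq

/-- single sum appearing in the analytic continuation -/
def Ssum (q : ℂ) : ℂ := ∑' n : ℕ, cq (aF q) q (n + 1) * ((vF q * q) ^ (n + 1) / (1 - 2 * q + q ^ (n + 3)))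

/-- the analytic continuation -/
def FF (q : ℂ) : ℂ :=
  CF q - AF q * (qPI (vF q) q / qPI (aF q * vF q) q) * (q ^ 2 / (1 - q) ^ 2 + q ^ 2 * Ssum q)

lemma T_coeff {q a : ℂ} (h0 : q ≠ 0) (ha : a ≠ 0) (hq : ‖q‖ < 1) (j : ℕ) :
    qPF (a * q ^ (-(j : ℤ))) q j / qPF (q ^ (-(j : ℤ))) q j = cq (q / a) q j * a ^ j := by
  have refl : ∀ x : ℂ, qPF (x * q ^ (-(j : ℤ))) q j = ∏ i ∈ Finset.range j, (1 - x / q ^ (i + 1)) := by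
    intro x
    unfold qPF
    rw [← Finset.prod_range_reflect]
    apply Finset.prod_congr rfl
    intro i hi
    rw [Finset.mem_range] at hi
    congr 1
    have e : q ^ j = q ^ (j - 1 - i) * q ^ (i + 1) := by rw [← pow_add]; congr 1; omega
    rw [zpow_neg, zpow_natCast, e]
    field_simp
  have r1 := refl 1
  rw [one_mul] at r1
  rw [refl a, r1, ← Finset.prod_div_distrib]
  unfold cq
  rw [← Finset.card_range j, ← Finset.prod_const, Finset.card_range, ← Finset.prod_mul_distrib]
  apply Finset.prod_congr rfl
  intro i _
  have h1 := one_sub_qpow_ne hq i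
  have h2 : q ^ (i + 1) ≠ 0 := pow_ne_zero _ h0
  have h3 : 1 - 1 / q ^ (i + 1) ≠ 0 := by
    intro h
    apply h1
    field_simp at h
    linear_combination -h
  rw [div_mul_eq_mul_div, div_eq_div_iff h3 h1]
  field_simp
  ring

lemma real_den {q : ℝ} (h0 : 0 < q) (h1 : q < 1 / 2) (n : ℕ) :
    1 - 2 * q ≤ ‖1 - 2 * (q : ℂ) + (q : ℂ) ^ n‖ := by
  have : 1 - 2 * (q : ℂ) + (q : ℂ) ^ n = ((1 - 2 * q + q ^ n : ℝ) : ℂ) := by push_cast; ring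
  rw [this, Complex.norm_real]
  have h := pow_pos h0 n
  rw [Real.norm_of_nonneg (by linarith)]
  linarith

lemma T_summable {q : ℝ} (h0 : 0 < q) (h1 : q < 1 / 2) :
    Summable (fun p : ℕ × ℕ => ‖Tterm (q : ℂ) (p.1 + 1) p.2‖) := by
  have hn : ‖(q : ℂ)‖ = q := by rw [Complex.norm_real, Real.norm_of_nonneg h0.le]
  have hq : ‖(q : ℂ)‖ < 1 / 2 := by rw [hn]; exact h1
  have hq1 : ‖(q : ℂ)‖ < 1 := by linarith
  have hq0 : (q : ℂ) ≠ 0 := by exact_mod_cast h0.ne'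
  obtain ⟨b1, b2, b3, b4, b5, b6, b7, b8⟩ := basic hq
  have ha : aF (q : ℂ) ≠ 0 := div_ne_zero (pow_ne_zero _ hq0) b2
  set a := aF (q : ℂ)
  set v := vF (q : ℂ)
  have s1 : Summable (fun n : ℕ => (‖v * q‖) ^ (n + 1) / (1 - 2 * q)) :=
    ((summable_nat_add_iff 1).2
      (summable_geometric_of_lt_one (norm_nonneg (v * (q : ℂ))) (by linarith))).div_const _
  have s2 : Summable (fun j : ℕ => bq ‖(q : ℂ) / a‖ ‖(q : ℂ)‖ j * (‖a * q‖) ^ j) := by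
    apply bq_summable (norm_nonneg _) (norm_nonneg _) hq1 (norm_nonneg _)
    rw [norm_mul]; nlinarith [norm_nonneg (q : ℂ), norm_nonneg a]
  have s3 := s1.mul_of_nonneg s2 (fun n => by
    have : 0 < 1 - 2 * q := by linarith
    simp only [Pi.zero_apply]; positivity) (fun j => by
      have := (bq_pos (norm_nonneg ((q : ℂ) / a)) (norm_nonneg (q : ℂ)) hq1 j).le
      simp only [Pi.zero_apply]; positivity)
  refine Summable.of_nonneg_of_le (fun _ => norm_nonneg _) ?_ s3
  rintro ⟨n, j⟩
  simp only [Tterm]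
  rw [T_coeff hq0 ha hq1]
  have e : v ^ (n + 1) * (q : ℂ) ^ ((j + 1) * (n + 1)) = (v * q) ^ (n + 1) * ((q : ℂ) ^ j) ^ (n + 1) := by
    rw [← pow_mul, mul_pow, add_mul, pow_add, one_mul]; ring
  change ‖cq (q / a) q j * a ^ j * (v ^ (n + 1) * (q : ℂ) ^ ((j + 1) * (n + 1)) / _)‖ ≤ _
  rw [e]
  have hc := cq_le (a := (q : ℂ) / a) le_rfl le_rfl hq1 j
  have hd := real_den h0 h1 (n + 1 + 2)
  have hp : (‖(q : ℂ)‖ ^ j) ^ (n + 1) ≤ ‖(q : ℂ)‖ ^ j := by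
    rw [pow_succ]
    have h3 : ‖(q : ℂ)‖ ^ j ≤ 1 := pow_le_one₀ (norm_nonneg _) hq1.le
    have : (‖(q : ℂ)‖ ^ j) ^ n ≤ 1 := pow_le_one₀ (by positivity) h3
    have : 0 ≤ ‖(q : ℂ)‖ ^ j := by positivity
    nlinarith
  have hpos : 0 < 1 - 2 * q := by linarith
  have hbp := (bq_pos (norm_nonneg ((q : ℂ) / a)) (norm_nonneg (q : ℂ)) hq1 j).le
  calc ‖cq (q / a) q j * a ^ j * ((v * q) ^ (n + 1) * ((q : ℂ) ^ j) ^ (n + 1) / (1 - 2 * (q : ℂ) + (q : ℂ) ^ (n + 1 + 2)))‖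
      = ‖cq (q / a) q j‖ * ‖a‖ ^ j * (‖v * q‖ ^ (n + 1) * (‖(q : ℂ)‖ ^ j) ^ (n + 1) / ‖1 - 2 * (q : ℂ) + (q : ℂ) ^ (n + 1 + 2)‖) := by
        simp only [norm_mul, norm_div, norm_pow]
    _ ≤ bq ‖(q : ℂ) / a‖ ‖(q : ℂ)‖ j * ‖a‖ ^ j * (‖v * q‖ ^ (n + 1) * ‖(q : ℂ)‖ ^ j / (1 - 2 * q)) := by gcongr
    _ = _ := by rw [norm_mul a, mul_pow]; ring

lemma T_sum {q : ℝ} (h0 : 0 < q) (h1 : q < 1 / 2) :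
    qPI (aF q) q / qPI (q : ℂ) q * ∑' p : ℕ × ℕ, Tterm (q : ℂ) (p.1 + 1) p.2 = Ssum q := by
  have hn : ‖(q : ℂ)‖ = q := by rw [Complex.norm_real, Real.norm_of_nonneg h0.le]
  have hq : ‖(q : ℂ)‖ < 1 / 2 := by rw [hn]; exact h1
  have hq1 : ‖(q : ℂ)‖ < 1 := by linarith
  have hq0 : (q : ℂ) ≠ 0 := by exact_mod_cast h0.ne'
  obtain ⟨b1, b2, b3, b4, b5, b6, b7, b8⟩ := basic hq
  have ha : aF (q : ℂ) ≠ 0 := div_ne_zero (pow_ne_zero _ hq0) b2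
  rw [(T_summable h0 h1).of_norm.tsum_prod, ← tsum_mul_left]
  unfold Ssum
  apply tsum_congr
  intro n
  have e : ∀ j, Tterm (q : ℂ) (n + 1) j = ((vF q * q) ^ (n + 1) / (1 - 2 * (q : ℂ) + (q : ℂ) ^ (n + 3))) *
      (cq (q / aF q) q j * (aF q * (q : ℂ) ^ (n + 1)) ^ j) := by
    intro j
    simp only [Tterm]
    rw [T_coeff hq0 ha hq1]
    have e : vF q ^ (n + 1) * (q : ℂ) ^ ((j + 1) * (n + 1)) =
        (vF q * q) ^ (n + 1) * ((q : ℂ) ^ (n + 1)) ^ j := by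
      rw [← pow_mul, mul_pow, add_mul, pow_add, one_mul, mul_comm (n + 1) j]; ring
    rw [e, mul_pow (aF q)]
    ring
  simp only [e]
  rw [tsum_mul_left]
  have hz : ‖aF q * (q : ℂ) ^ (n + 1)‖ < 1 := by
    rw [norm_mul, norm_pow]
    have : ‖(q : ℂ)‖ ^ (n + 1) < 1 := pow_lt_one₀ (norm_nonneg _) hq1 (by omega)
    have : 0 ≤ ‖(q : ℂ)‖ ^ (n + 1) := by positivity
    nlinarith [norm_nonneg (aF q)]
  have hb := qbinom (a := q / aF q) hq1 hz
  have z1 := qPI_ne_zero hq1 hz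
  have z2 := qPI_ne_zero hq1 hq1
  have p1 := qPI_split (aF q) hq1 (n + 1)
  have p2 := qPI_split (q : ℂ) hq1 (n + 1)
  have e2 : (q : ℂ) / aF q * (aF q * (q : ℂ) ^ (n + 1)) = q * (q : ℂ) ^ (n + 1) := by
    field_simp
  rw [e2] at hb
  set G := ∑' j, cq (q / aF q) q j * (aF q * (q : ℂ) ^ (n + 1)) ^ j
  have z3 : qPF (q : ℂ) q (n + 1) ≠ 0 := fun h => z2 (by rw [p2, h, zero_mul])
  have z4 : qPI ((q : ℂ) * (q : ℂ) ^ (n + 1)) q ≠ 0 := fun h => z2 (by rw [p2, h, mul_zero])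
  have key : qPI (aF q) q / qPI (q : ℂ) q * G = cq (aF q) q (n + 1) := by
    rw [cq_eq, p1, p2, ← hb, ]
    rw [← hb] at z4
    have : G ≠ 0 := fun h => z4 (by rw [h, mul_zero])
    field_simp
  rw [← key]
  ring

lemma FF_real {q : ℝ} (h0 : 0 < q) (h1 : q < 1 / 2) :
    FF q = DF (q : ℂ) - (q : ℂ) ^ 2 * AF (q : ℂ) *
            (qPI (aF q) q * qPI (vF q) q / (qPI (q : ℂ) q * qPI (aF q * vF q) q)) *
            ∑' p : ℕ × ℕ, Tterm (q : ℂ) (p.1 + 1) p.2 := by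
  unfold FF DF
  rw [← T_sum h0 h1]
  rw [mul_div_mul_comm]
  ring

lemma PA_prod {q : ℂ} (hq : ‖q‖ < 1 / 2) (m : ℕ) :
    (∏ k ∈ Finset.Icc 1 m,
      ((1 - q - q ^ k + q ^ (k + 1) - q ^ (k + 2)) / (1 - q - q ^ (k + 1)))) =
      qPF (vF q * q) q m / qPF (aF q * vF q) q m := by
  obtain ⟨b1, b2, b3, b4, b5, b6, b7, b8⟩ := basic hq
  induction m with
  | zero => simp [qPF]
  | succ m ih =>
    rw [Finset.prod_Icc_succ_top (by omega), ih]
    unfold qPF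
    rw [Finset.prod_range_succ, Finset.prod_range_succ, mul_div_mul_comm]
    congr 1
    have e1 : 1 - q - q ^ (m + 1) + q ^ (m + 1 + 1) - q ^ (m + 1 + 2) =
        (1 - q) * (1 - vF q * q * q ^ m) := by
      unfold vF; field_simp; ring
    have e2 : 1 - q - q ^ (m + 1 + 1) = (1 - q) * (1 - aF q * vF q * q ^ m) := by
      rw [b3]; field_simp; ring
    rw [e1, e2, mul_div_mul_left _ _ b1]

lemma PA_term {q : ℂ} (h0 : q ≠ 0) (hq : ‖q‖ < 1 / 2) (m : ℕ) :
    PAterm q (m + 1) = -(1 / q ^ 2) * ((-(q ^ 2 / (1 - 2 * q))) ^ (m + 1) *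
      (qPF (vF q) q (m + 1) / qPF (aF q * vF q) q (m + 1))) := by
  obtain ⟨b1, b2, b3, b4, b5, b6, b7, b8⟩ := basic hq
  have hq1 : ‖q‖ < 1 := by linarith
  unfold PAterm
  rw [Nat.add_sub_cancel, PA_prod hq]
  have e1 : qPF (vF q) q (m + 1) = (-(q ^ 2 / (1 - q))) * qPF (vF q * q) q m := by
    unfold qPF
    rw [Finset.prod_range_succ']
    rw [mul_comm]
    congr 1
    · unfold vF; field_simp; ring
    · apply Finset.prod_congr rfl
      intro i _; ring
  have e2 : qPF (aF q * vF q) q (m + 1) = qPF (aF q * vF q) q m * (1 - aF q * vF q * q ^ m) :=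
    Finset.prod_range_succ _ _
  have e3 : 1 - q - q ^ (m + 1 + 1) = (1 - q) * (1 - aF q * vF q * q ^ m) := by
    rw [b3]; field_simp; ring
  have z := qPI_ne_zero hq1 (x := aF q * vF q) (by linarith)
  rw [qPI_split _ hq1 (m + 1), e2] at z
  have z1 := left_ne_zero_of_mul (left_ne_zero_of_mul z)
  have z2 := right_ne_zero_of_mul (left_ne_zero_of_mul z)
  rw [e1, e2, e3]
  have e4 : (-(q ^ 2 / (1 - 2 * q))) ^ (m + 1) = (-1) ^ (m + 1) * q ^ (2 * (m + 1)) / (1 - 2 * q) ^ (m + 1) := by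
    rw [neg_pow, div_pow, pow_mul, mul_div_assoc]
  rw [e4]
  have z3 : (1 - 2 * q) ^ (m + 1) ≠ 0 := pow_ne_zero _ b8
  generalize (1 - 2 * q) ^ (m + 1) = Y at *
  generalize (1 - aF q * vF q * q ^ m) = Z at *
  generalize qPF (aF q * vF q) q m = W at *
  field_simp

lemma ratio_eq {q : ℂ} (hq : ‖q‖ < 1 / 2) (m : ℕ) :
    qPF (vF q) q (m + 1) / qPF (aF q * vF q) q (m + 1) =
      (qPI (vF q) q / qPI (aF q * vF q) q) * ∑' n, cq (aF q) q n * (vF q * q ^ (m + 1)) ^ n := by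
  obtain ⟨b1, b2, b3, b4, b5, b6, b7, b8⟩ := basic hq
  have hq1 : ‖q‖ < 1 := by linarith
  have hz : ‖vF q * q ^ (m + 1)‖ < 1 := by
    have : vF q * q ^ (m + 1) = vF q * q * q ^ m := by ring
    rw [this, norm_mul, norm_pow]
    have : ‖q‖ ^ m ≤ 1 := pow_le_one₀ (norm_nonneg _) hq1.le
    have : 0 ≤ ‖q‖ ^ m := by positivity
    nlinarith [norm_nonneg (vF q * q)]
  have hb := qbinom (a := aF q) hq1 hz
  have z1 := qPI_ne_zero hq1 hz
  have z := qPI_ne_zero hq1 (x := aF q * vF q) (by linarith)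
  have p1 := qPI_split (vF q) hq1 (m + 1)
  have p2 := qPI_split (aF q * vF q) hq1 (m + 1)
  set G := ∑' n, cq (aF q) q n * (vF q * q ^ (m + 1)) ^ n
  rw [← mul_assoc] at hb
  rw [← hb] at p2
  rw [p2] at z
  have z2 := left_ne_zero_of_mul z
  have z3 : G ≠ 0 := right_ne_zero_of_mul (right_ne_zero_of_mul z)
  rw [p1, p2]
  field_simp

lemma PA_small {q : ℂ} (h0 : q ≠ 0) (hq : ‖q‖ < 1 / 10) : PAseries q = FF q := by
  have hq2 : ‖q‖ < 1 / 2 := by linarith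
  have hq1 : ‖q‖ < 1 := by linarith
  obtain ⟨b1, b2, b3, b4, b5, b6, b7, b8⟩ := basic hq2
  set x : ℂ := -(q ^ 2 / (1 - 2 * q)) with hx
  have hx1 : ‖x‖ ≤ 1 / 2 := by
    rw [hx, norm_neg, norm_div, norm_pow]
    have h := norm_sub_norm_le (1 : ℂ) (2 * q)
    rw [norm_mul, norm_one] at h
    norm_num at h
    rw [div_le_iff₀ (by linarith)]
    nlinarith [norm_nonneg q]
  clear_value x
  set c := cq (aF q) q
  set v := vF q
  set W := qPI v q / qPI (aF q * v) q with hW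
  let t : ℕ → ℕ → ℂ := fun m n => x ^ (m + 1) * (c n * (v * q ^ (m + 1)) ^ n)
  have s1 : Summable (fun m : ℕ => ‖x‖ ^ (m + 1)) :=
    (summable_nat_add_iff 1).2 (summable_geometric_of_lt_one (norm_nonneg x) (by linarith))
  have s2 : Summable (fun n : ℕ => bq ‖aF q‖ ‖q‖ n * ‖v * q‖ ^ n) :=
    bq_summable (norm_nonneg _) (norm_nonneg _) hq1 (norm_nonneg _) (by linarith)
  have hbp : ∀ n, 0 ≤ bq ‖aF q‖ ‖q‖ n := fun n => (bq_pos (norm_nonneg _) (norm_nonneg _) hq1 n).le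
  have s3 := s1.mul_of_nonneg s2 (fun n => by simp only [Pi.zero_apply]; positivity)
    (fun n => by have := hbp n; simp only [Pi.zero_apply]; positivity)
  have s : Summable (Function.uncurry t) := by
    apply Summable.of_norm_bounded s3
    rintro ⟨m, n⟩
    simp only [Function.uncurry, t]
    have e : v * q ^ (m + 1) = v * q * q ^ m := by ring
    rw [e, norm_mul, norm_mul, norm_pow, norm_pow, norm_mul (v * q), norm_pow q]
    have h3 : ‖q‖ ^ m ≤ 1 := pow_le_one₀ (norm_nonneg _) hq1.le
    have h4 : ‖v * q‖ * ‖q‖ ^ m ≤ ‖v * q‖ := mul_le_of_le_one_right (norm_nonneg _) h3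
    have hc : ‖c n‖ ≤ bq ‖aF q‖ ‖q‖ n := cq_le le_rfl le_rfl hq1 n
    have := hbp n
    gcongr
  have hsw : ∑' m, ∑' n, t m n = ∑' n, ∑' m, t m n := s.tsum_comm.symm
  have inner : ∀ n, ∑' m, t m n = -(q ^ 2 * (c n * ((v * q) ^ n / (1 - 2 * q + q ^ (n + 2))))) := by
    intro n
    have hy : ‖x * q ^ n‖ < 1 := by
      rw [norm_mul, norm_pow]
      have h3 : ‖q‖ ^ n ≤ 1 := pow_le_one₀ (norm_nonneg _) hq1.le
      have : 0 ≤ ‖q‖ ^ n := by positivity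
      nlinarith [norm_nonneg x]
    have e : ∀ m, t m n = (c n * v ^ n * (x * q ^ n)) * (x * q ^ n) ^ m := by
      intro m
      simp only [t]
      rw [mul_pow v, ← pow_mul, mul_comm (m + 1) n, pow_mul, mul_pow]
      ring
    simp only [e]
    rw [tsum_mul_left, tsum_geometric_of_norm_lt_one hy]
    have z : 1 - x * q ^ n ≠ 0 := by
      intro h
      have : x * q ^ n = 1 := by linear_combination -h
      rw [this] at hy; simp at hy
    have e2 : 1 - 2 * q + q ^ (n + 2) = (1 - 2 * q) * (1 - x * q ^ n) := by
      rw [hx]; field_simp; ring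
    rw [e2]
    have hx2 : x * (1 - 2 * q) = -q ^ 2 := by rw [hx, neg_mul, div_mul_cancel₀ _ b8]
    rw [mul_pow v]
    generalize 1 - x * q ^ n = Z at z ⊢
    generalize 1 - 2 * q = Y at hx2 b8 ⊢
    field_simp
    first
    | linear_combination (c n * v ^ n * q ^ n) * hx2
    | linear_combination (c n * v ^ n) * hx2
    | linear_combination hx2
  have sm : ∑' m, PAterm q (m + 1) = -(1 / q ^ 2) * (W * ∑' m, ∑' n, t m n) := by
    rw [← tsum_mul_left, ← tsum_mul_left]
    apply tsum_congr
    intro m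
    rw [PA_term h0 hq2, ratio_eq hq2, ← hx]
    simp only [t]
    rw [tsum_mul_left]
    change -(1 / q ^ 2) * (x ^ (m + 1) * (W * ∑' n, c n * (v * q ^ (m + 1)) ^ n)) = _
    ring
  have s4 : Summable (fun n => ∑' m, t m n) := by
    have := s.prod_symm.prod
    exact this
  have fin : ∑' n, ∑' m, t m n = -(q ^ 2 * (1 / (1 - q) ^ 2 + Ssum q)) := by
    rw [s4.tsum_eq_zero_add]
    simp only [inner]
    rw [tsum_neg, tsum_mul_left]
    have c0 : c 0 = 1 := by simp [c, cq]
    rw [c0]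
    have : (1 - 2 * q + q ^ (0 + 2)) = (1 - q) ^ 2 := by ring
    rw [this]
    unfold Ssum
    simp only [pow_zero, one_mul]
    have e : ∀ n, n + 1 + 2 = n + 3 := fun n => by omega
    simp only [e]
    ring
  unfold PAseries FF
  rw [sm, hsw, fin]
  have hC : 2 * q * (3 - 10 * q + 9 * q ^ 2 - q ^ 3) / ((1 - 2 * q) ^ 2 * (1 - q)) = CF q := by
    unfold CF; rw [mul_comm ((1 - 2 * q) ^ 2)]
  have hA : -2 * q ^ 3 * (1 - q) ^ 2 / (1 - 2 * q) ^ 2 = -(q ^ 2 * AF q) := by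
    unfold AF; ring
  rw [hC, hA]
  change _ = CF q - AF q * W * _
  field_simp
  ring

lemma qPI_diff {U : Set ℂ} (hU : IsOpen U) {b : ℂ → ℂ} (hb : DifferentiableOn ℂ b U) {M r : ℝ}
    (hr : r < 1) (hr0 : 0 ≤ r) (hM : ∀ z ∈ U, ‖b z‖ ≤ M) (hz : ∀ z ∈ U, ‖z‖ ≤ r) :
    DifferentiableOn ℂ (fun z => qPI (b z) z) U := by
  have hd : ∀ i : ℕ, DifferentiableOn ℂ (fun z => -(b z * z ^ i)) U := fun i =>
    (hb.mul ((differentiable_id.pow i).differentiableOn)).neg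
  have h := Summable.hasProdLocallyUniformlyOn_nat_one_add (f := fun (i : ℕ) (z : ℂ) => -(b z * z ^ i)) hU
    (u := fun i => M * r ^ i) ((summable_geometric_of_lt_one hr0 hr).mul_left M)
    (Eventually.of_forall fun i z hzU => by
      rw [norm_neg, norm_mul, norm_pow]
      have h1 := hM z hzU
      have h2 := hz z hzU
      have : 0 ≤ M := (norm_nonneg _).trans h1
      gcongr)
    (fun i => (hd i).continuousOn)
  have h2 := h.tendstoLocallyUniformlyOn_finsetRange.differentiableOn
    (Eventually.of_forall fun N => DifferentiableOn.fun_finsetProd fun i _ =>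
      (differentiableOn_const 1).add (hd i)) hU
  refine h2.congr fun z _ => ?_
  simp only [qPI, sub_eq_add_neg]

lemma pow_diff {q p : ℂ} (hq : ‖q‖ ≤ 1 / 2) (hp : ‖p‖ ≤ 1 / 2) (k : ℕ) :
    ‖q ^ k - p ^ k‖ ≤ 2 * ‖q - p‖ := by
  induction k with
  | zero => simp
  | succ k ih =>
    have e : q ^ (k + 1) - p ^ (k + 1) = q * (q ^ k - p ^ k) + (q - p) * p ^ k := by ring
    have h1 : ‖p‖ ^ k ≤ 1 := pow_le_one₀ (norm_nonneg _) (by linarith)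
    calc ‖q ^ (k + 1) - p ^ (k + 1)‖ ≤ ‖q‖ * ‖q ^ k - p ^ k‖ + ‖q - p‖ * ‖p‖ ^ k := by
          rw [e]
          refine (norm_add_le _ _).trans ?_
          rw [norm_mul, norm_mul, norm_pow]
      _ ≤ 1 / 2 * (2 * ‖q - p‖) + ‖q - p‖ * 1 := by gcongr
      _ = _ := by ring

lemma FF_analytic {q : ℝ} (h0 : 0 < q) (h1 : q < 1 / 2) : AnalyticAt ℂ FF (q : ℂ) := by
  have hn : ‖(q : ℂ)‖ = q := by rw [Complex.norm_real, Real.norm_of_nonneg h0.le]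
  let U : Set ℂ := Metric.ball 0 (1 / 2) ∩ Metric.ball (q : ℂ) ((1 - 2 * q) / 8)
  have hU : IsOpen U := Metric.isOpen_ball.inter Metric.isOpen_ball
  have hm : (q : ℂ) ∈ U := by
    refine ⟨?_, Metric.mem_ball_self (by linarith)⟩
    rw [mem_ball_zero_iff, hn]; exact h1
  have hU1 : ∀ z ∈ U, ‖z‖ < 1 / 2 := fun z hz => mem_ball_zero_iff.1 hz.1
  have hden : ∀ z ∈ U, ∀ n : ℕ, (1 - 2 * q) / 2 ≤ ‖1 - 2 * z + z ^ n‖ := by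
    intro z hz n
    have d : ‖z - q‖ < (1 - 2 * q) / 8 := mem_ball_iff_norm.1 hz.2
    have hp := pow_diff (hU1 z hz).le (p := (q : ℂ)) (by rw [hn]; exact h1.le) n
    have hr := real_den h0 h1 n
    have e : 1 - 2 * (q : ℂ) + (q : ℂ) ^ n = (1 - 2 * z + z ^ n) + (2 * (z - q) - (z ^ n - (q : ℂ) ^ n)) := by ring
    rw [e] at hr
    have t1 := norm_add_le (1 - 2 * z + z ^ n) (2 * (z - q) - (z ^ n - (q : ℂ) ^ n))
    have t2 := norm_sub_le (2 * (z - q)) (z ^ n - (q : ℂ) ^ n)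
    rw [norm_mul] at t2
    norm_num at t2
    linarith
  have hden0 : ∀ z ∈ U, ∀ n : ℕ, 1 - 2 * z + z ^ n ≠ 0 := fun z hz n =>
    norm_pos_iff.1 (by have := hden z hz n; linarith)
  have dv : DifferentiableOn ℂ vF U := by
    unfold vF
    refine DifferentiableOn.div (by fun_prop) (by fun_prop) fun z hz => (basic (hU1 z hz)).1
  have da : DifferentiableOn ℂ aF U := by
    unfold aF
    refine DifferentiableOn.div (by fun_prop) (by fun_prop) fun z hz => (basic (hU1 z hz)).2.1
  have dA : DifferentiableOn ℂ AF U := by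
    unfold AF
    refine DifferentiableOn.div (by fun_prop) (by fun_prop) fun z hz => ?_
    exact pow_ne_zero _ (basic (hU1 z hz)).2.2.2.2.2.2.2
  have dC : DifferentiableOn ℂ CF U := by
    unfold CF
    refine DifferentiableOn.div (by fun_prop) (by fun_prop) fun z hz => ?_
    exact mul_ne_zero (basic (hU1 z hz)).1 (pow_ne_zero _ (basic (hU1 z hz)).2.2.2.2.2.2.2)
  have dP1 : DifferentiableOn ℂ (fun z => qPI (vF z) z) U :=
    qPI_diff hU dv (M := 3 / 2) (r := 1 / 2) (by norm_num) (by norm_num)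
      (fun z hz => (basic (hU1 z hz)).2.2.2.2.1) (fun z hz => (hU1 z hz).le)
  have dP2 : DifferentiableOn ℂ (fun z => qPI (aF z * vF z) z) U :=
    qPI_diff hU (b := fun z => aF z * vF z) (da.mul dv) (M := 1 / 2) (r := 1 / 2) (by norm_num) (by norm_num)
      (fun z hz => (basic (hU1 z hz)).2.2.2.1) (fun z hz => (hU1 z hz).le)
  have dS : DifferentiableOn ℂ Ssum U := by
    have hs := ((summable_nat_add_iff 1).2 (bq_summable (α := 1) (r := 1 / 2) (ρ := 3 / 4)
      (by norm_num) (by norm_num) (by norm_num) (by norm_num) (by norm_num))).div_const ((1 - 2 * q) / 2)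
    refine differentiableOn_tsum_of_summable_norm hs ?_ hU ?_
    · intro n
      apply DifferentiableOn.mul
      · unfold cq
        refine DifferentiableOn.fun_finsetProd fun i _ => ?_
        refine DifferentiableOn.div (by fun_prop) (by fun_prop) fun z hz => ?_
        exact one_sub_qpow_ne (by have := hU1 z hz; linarith) i
      · exact DifferentiableOn.div (by fun_prop) (by fun_prop) fun z hz => hden0 z hz _
    · intro n z hz
      obtain ⟨b1, b2, b3, b4, b5, b6, b7, b8⟩ := basic (hU1 z hz)
      rw [norm_mul, norm_div, norm_pow, mul_div_assoc]
      have hc := cq_le b7 (hU1 z hz).le (by norm_num) (n + 1)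
      have hd := hden z hz (n + 3)
      have : 0 < (1 - 2 * q) / 2 := by linarith
      have := (bq_pos (α := 1) (r := 1 / 2) (by norm_num) (by norm_num) (by norm_num) (n + 1)).le
      gcongr
  have dF : DifferentiableOn ℂ FF U := by
    unfold FF
    refine dC.sub ((dA.mul (dP1.div dP2 fun z hz => ?_)).mul (DifferentiableOn.add ?_ ?_))
    · have := hU1 z hz
      have h4 := (basic this).2.2.2.1
      exact qPI_ne_zero (by linarith) (by linarith)
    · exact DifferentiableOn.div (by fun_prop) (by fun_prop) fun z hz =>
        pow_ne_zero _ (basic (hU1 z hz)).1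
    · exact DifferentiableOn.mul (by fun_prop) dS
  exact dF.analyticAt (hU.mem_nhds hm)

/-- For real `q ∈ (0, 1/2)`, the double series `T(q)` converges absolutely and the
analytic continuation of `PA` satisfies
`PA(q) = D(q) - q² A(q) ((a;q)_∞ (v;q)_∞/((q;q)_∞ (av;q)_∞)) T(q)`. -/
theorem PA_double_sum_representation :
    ∃ f : ℂ → ℂ,
      AnalyticOnNhd ℂ f {z : ℂ | z.im = 0 ∧ 0 < z.re ∧ z.re < 1 / 2} ∧
      (∀ z : ℂ, ‖z‖ < 1 / 10 → f z = PAseries z) ∧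
      ∀ q : ℝ, 0 < q → q < 1 / 2 →
        Summable (fun p : ℕ × ℕ => ‖Tterm (q : ℂ) (p.1 + 1) p.2‖) ∧
        f (q : ℂ) =
          DF (q : ℂ) - (q : ℂ) ^ 2 * AF (q : ℂ) *
            (qPI (aF q) q * qPI (vF q) q / (qPI (q : ℂ) q * qPI (aF q * vF q) q)) *
            ∑' p : ℕ × ℕ, Tterm (q : ℂ) (p.1 + 1) p.2 := by
  classical
  refine ⟨fun z => if z = 0 then PAseries 0 else FF z, ?_, ?_, ?_⟩
  · rintro z ⟨him, h0, h1⟩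
    have hz : z = ((z.re : ℝ) : ℂ) := Complex.ext (by simp) (by simp [him])
    have hne : z ≠ 0 := by
      rintro rfl
      simp at h0
    have ha := FF_analytic h0 h1
    rw [← hz] at ha
    refine ha.congr ?_
    filter_upwards [isOpen_ne.mem_nhds hne] with w hw
    exact (if_neg hw).symm
  · intro z hz
    by_cases h : z = 0
    · simp [h]
    · simp only [h, if_false]
      exact (PA_small h hz).symm
  · intro q h0 h1
    refine ⟨T_summable h0 h1, ?_⟩
    have hq0 : (q : ℂ) ≠ 0 := by exact_mod_cast h0.ne'
    simp only [hq0, if_false]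
    exact FF_real h0 h1
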